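/- Let $F$ be a dyadic local field with $e = \mathrm{ord}(2)$ and let $a_1, a_2, a_3 \in F^\times$ with $\mathrm{ord}(a_1) = 0$, $\mathrm{ord}(a_2) = -2e$, and $-a_1a_2 \in (F^\times)^2 \cup \Delta(F^\times)^2$. If $\mathrm{ord}(a_3) = 0$ then $[a_1, a_2, a_3]$ is isotropic; if $\mathrm{ord}(a_3) = 1$ then $[a_1, a_2, a_3]$ is isotropic if and only if $[a_1, a_2]$ is isotropic. -/

import Mathlib

noncomputable section

/-- A normalized additive `ℤ`-valued valuation presenting `F` as a dyadic local field
(`F` is a finite extension of `ℚ₂` and `ord` its normalized valuation). -/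
structure IsDyadicOrd {F : Type*} [Field F] [Algebra ℚ_[2] F] (ord : F → WithTop ℤ) : Prop where
  map_zero : ord 0 = ⊤
  ne_top : ∀ x : F, x ≠ 0 → ord x ≠ ⊤
  map_mul : ∀ x y : F, ord (x * y) = ord x + ord y
  min_le_add : ∀ x y : F, min (ord x) (ord y) ≤ ord (x + y)
  surj : ∀ n : ℤ, ∃ x : F, ord x = (n : WithTop ℤ)
  compat : ∀ q : ℚ_[2], q ≠ 0 → q.valuation = 0 → ord (algebraMap ℚ_[2] F q) = 0

/-- The order of the relative quadratic defect `d(a) = ord (a⁻¹ 𝔡(a))`, where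
`𝔡(a) = ⋂ₓ (a - x²)𝒪` is the quadratic defect; it is valued in `ℕ∞`
(`d(a) ≥ 0` always, and `d(a) = ⊤` iff `𝔡(a) = 0`, i.e. `a` is a square). -/
def ddefect {F : Type*} [Field F] (ord : F → WithTop ℤ) (a : F) : ℕ∞ :=
  ⨆ x : F, WithTop.map Int.toNat (ord (a⁻¹ * (a - x ^ 2)))

/-- `d(a)` viewed in `WithTop ℤ`. -/
def dz {F : Type*} [Field F] (ord : F → WithTop ℤ) (a : F) : WithTop ℤ :=
  WithTop.map (Nat.cast : ℕ → ℤ) (ddefect ord a)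

/-- The Hilbert symbol `(a,b)_𝔭 = 1` iff `z² = a x² + b y²` has a nontrivial solution. -/
def hilbertSym (F : Type*) [Field F] (a b : F) : ℤ :=
  @ite _ (∃ x y z : F, (x, y, z) ≠ (0, 0, 0) ∧ a * x ^ 2 + b * y ^ 2 = z ^ 2)
    (Classical.propDecidable _) 1 (-1)

section General
variable {K : Type*} [NormedField K] [IsUltrametricDist K]

lemma hensel_quad [CompleteSpace K] (A B k : K) (hA : ‖A‖ ≤ 1) (hB : ‖B‖ = 1) (hk : ‖k‖ < 1) :
    ∃ q : K, A * q ^ 2 + B * q + k = 0 := by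
  have hB0 : B ≠ 0 := by
    intro h; simp [h] at hB
  let f : K → K := fun q => -(A * q ^ 2 + k) / B
  let s : Set K := Metric.closedBall 0 ‖k‖
  have hs : IsComplete s := Metric.isClosed_closedBall.isComplete
  have hms : Set.MapsTo f s s := by
    intro q hq
    simp only [s, mem_closedBall_zero_iff] at hq ⊢
    simp only [f, norm_div, norm_neg, hB, div_one]
    refine (IsUltrametricDist.norm_add_le_max _ _).trans (max_le ?_ le_rfl)
    rw [norm_mul, norm_pow]
    have h0 := norm_nonneg q
    have h1 := norm_nonneg A
    have h2 : ‖q‖ ^ 2 ≤ ‖k‖ := by nlinarith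
    have h3 := sq_nonneg ‖q‖
    nlinarith
  have hc : ContractingWith ‖k‖₊ (hms.restrict f s s) := by
    refine ⟨by exact_mod_cast hk, LipschitzWith.of_dist_le_mul ?_⟩
    rintro ⟨x, hx⟩ ⟨y, hy⟩
    simp only [s, mem_closedBall_zero_iff] at hx hy
    simp only [Subtype.dist_eq, Set.MapsTo.val_restrict_apply, dist_eq_norm, coe_nnnorm]
    have : f x - f y = -(A * (x + y) * (x - y)) / B := by
      simp only [f]; field_simp; ring
    rw [this, norm_div, norm_neg, hB, div_one, norm_mul, norm_mul]
    have h1 : ‖x + y‖ ≤ ‖k‖ := (IsUltrametricDist.norm_add_le_max _ _).trans (max_le hx hy)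
    have h2 : ‖A‖ * ‖x + y‖ ≤ ‖k‖ := by
      nlinarith [norm_nonneg A, norm_nonneg (x + y)]
    exact mul_le_mul_of_nonneg_right h2 (norm_nonneg _)
  obtain ⟨q, -, hq, -⟩ := hc.exists_fixedPoint' hs hms (x := 0) (by simp [s]) (edist_ne_top _ _)
  refine ⟨q, ?_⟩
  have : -(A * q ^ 2 + k) / B = q := hq
  rw [div_eq_iff hB0] at this
  linear_combination -this

lemma pow_near_one [ProperSpace K] (u : K) (hu : ‖u‖ = 1) :
    ∃ k : ℕ, 0 < k ∧ ‖u ^ k - 1‖ < 1 := by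
  obtain ⟨a, -, φ, hφ, ht⟩ := (isCompact_closedBall (0 : K) 1).tendsto_subseq
    (x := fun n : ℕ => u ^ n) (by intro n; simp [hu])
  have hC := ht.cauchySeq
  rw [Metric.cauchySeq_iff'] at hC
  obtain ⟨N, hN⟩ := hC 1 one_pos
  have h := hN (N + 1) (Nat.le_succ _)
  have hlt : φ N < φ (N + 1) := hφ (Nat.lt_succ_self N)
  refine ⟨φ (N + 1) - φ N, Nat.sub_pos_of_lt hlt, ?_⟩
  simp only [Function.comp, dist_eq_norm] at h
  have he : u ^ φ (N + 1) - u ^ φ N = u ^ φ N * (u ^ (φ (N + 1) - φ N) - 1) := by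
    rw [mul_sub, ← pow_add, Nat.add_sub_cancel' hlt.le, mul_one]
  rwa [he, norm_mul, norm_pow, hu, one_pow, one_mul] at h

lemma sqrt_near [ProperSpace K] (h2 : ‖(2 : K)‖ < 1) (u : K) (hu : ‖u‖ = 1) :
    ∃ p : K, ‖p ^ 2 - u‖ < 1 := by
  have key : ∀ k : ℕ, 0 < k → ‖u ^ k - 1‖ < 1 → ∃ p : K, ‖p ^ 2 - u‖ < 1 := by
    intro k
    induction k using Nat.strong_induction_on with
    | _ k ih =>
      intro hk hn
      rcases Nat.even_or_odd' k with ⟨j, rfl | rfl⟩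
      · refine ih j (by omega) (by omega) ?_
        have e1 : (u ^ j - 1) ^ 2 = (u ^ (2 * j) - 1) + 2 * (1 - u ^ j) := by
          rw [pow_mul']; ring
        have e2 : ‖(1 : K) - u ^ j‖ ≤ 1 := by
          rw [sub_eq_add_neg]
          refine (IsUltrametricDist.norm_add_le_max _ _).trans ?_
          simp [hu]
        have e3 : ‖(u ^ j - 1) ^ 2‖ < 1 := by
          rw [e1]
          refine (IsUltrametricDist.norm_add_le_max _ _).trans_lt (max_lt hn ?_)
          rw [norm_mul]
          nlinarith [norm_nonneg (2 : K)]
        rw [norm_pow] at e3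
        by_contra hcon
        push Not at hcon
        nlinarith
      · refine ⟨u ^ (j + 1), ?_⟩
        have : (u ^ (j + 1)) ^ 2 - u = u * (u ^ (2 * j + 1) - 1) := by ring
        rw [this, norm_mul, hu, one_mul]
        exact hn
  obtain ⟨k, hk, hn⟩ := pow_near_one u hu
  exact key k hk hn
end General

section Ord
variable {F : Type*} [Field F] [Algebra ℚ_[2] F] {ord : F → WithTop ℤ}

lemma IsDyadicOrd.exists_int (hv : IsDyadicOrd ord) {x : F} (hx : x ≠ 0) :
    ∃ n : ℤ, ord x = (n : WithTop ℤ) := by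
  obtain ⟨n, hn⟩ := WithTop.ne_top_iff_exists.1 (hv.ne_top x hx)
  exact ⟨n, hn.symm⟩

lemma IsDyadicOrd.one (hv : IsDyadicOrd ord) : ord 1 = 0 := by
  obtain ⟨n, hn⟩ := hv.exists_int (one_ne_zero (α := F))
  have := hv.map_mul 1 1
  rw [mul_one, hn] at this
  norm_cast at this
  rw [hn]
  have : n = 0 := by omega
  simp [this]

lemma IsDyadicOrd.neg (hv : IsDyadicOrd ord) (x : F) : ord (-x) = ord x := by
  have h1 : ord (-1 : F) = 0 := by
    obtain ⟨n, hn⟩ := hv.exists_int (neg_ne_zero.2 (one_ne_zero (α := F)))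
    have := hv.map_mul (-1) (-1)
    rw [neg_mul_neg, mul_one, hn, hv.one] at this
    norm_cast at this
    rw [hn]
    have : n = 0 := by omega
    simp [this]
  rw [neg_eq_neg_one_mul, hv.map_mul, h1, zero_add]

lemma IsDyadicOrd.ne_zero (hv : IsDyadicOrd ord) {x : F} {n : ℤ} (h : ord x = (n : WithTop ℤ)) :
    x ≠ 0 := by
  rintro rfl
  rw [hv.map_zero] at h
  exact WithTop.coe_ne_top h.symm

lemma IsDyadicOrd.ord_zpow (hv : IsDyadicOrd ord) {x : F} {n : ℤ} (h : ord x = (n : WithTop ℤ))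
    (m : ℤ) : ord (x ^ m) = ((m * n : ℤ) : WithTop ℤ) := by
  have hx := hv.ne_zero h
  induction m using Int.induction_on with
  | zero => simp [hv.one]
  | succ i ih =>
    rw [zpow_add_one₀ hx, hv.map_mul, ih, h, add_mul, one_mul]
    rfl
  | pred i ih =>
    obtain ⟨k, hk⟩ := hv.exists_int (zpow_ne_zero (-(i : ℤ) - 1) hx)
    have : x ^ (-(i : ℤ)) = x ^ (-(i : ℤ) - 1) * x := by
      rw [← zpow_add_one₀ hx]; congr 1; ring
    rw [this, hv.map_mul, hk, h] at ih
    norm_cast at ih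
    rw [hk]
    norm_cast
    linarith

lemma IsDyadicOrd.add_eq (hv : IsDyadicOrd ord) {x y : F} (h : ord x < ord y) :
    ord (x + y) = ord x := by
  apply le_antisymm
  · by_contra hc
    push Not at hc
    have := hv.min_le_add (x + y) (-y)
    rw [hv.neg, add_neg_cancel_right] at this
    exact absurd this (not_le.2 (lt_min hc h))
  · have := hv.min_le_add x y
    rwa [min_eq_left h.le] at this

lemma IsDyadicOrd.e_pos [FiniteDimensional ℚ_[2] F] (hv : IsDyadicOrd ord) {e : ℕ}
    (he : ord (2 : F) = ((e : ℤ) : WithTop ℤ)) : 0 < e := by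
  by_contra h0
  have h0 : e = 0 := by omega
  subst h0
  have hq : ∀ q : ℚ_[2], 0 ≤ ord (algebraMap ℚ_[2] F q) := by
    intro q
    by_cases hq : q = 0
    · simp [hq, hv.map_zero]
    have hpv : (2 : ℚ_[2]).valuation = 1 := by
      exact_mod_cast Padic.valuation_p (p := 2)
    have hu := hv.compat (q * 2 ^ (-q.valuation)) (mul_ne_zero hq (zpow_ne_zero _ two_ne_zero)) (by
      rw [Padic.valuation_mul hq (zpow_ne_zero _ two_ne_zero), Padic.valuation_zpow, hpv]; ring)
    rw [_root_.map_mul, hv.map_mul, map_zpow₀, map_ofNat, hv.ord_zpow he] at hu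
    simp at hu
    exact hu.ge
  let S : Subalgebra ℚ_[2] F :=
    { carrier := {x | 0 ≤ ord x}
      mul_mem' := fun {a b} ha hb => by
        simp only [Set.mem_ofPred_eq] at *
        rw [hv.map_mul]; exact add_nonneg ha hb
      add_mem' := fun {a b} ha hb => by
        simp only [Set.mem_ofPred_eq] at *
        exact (le_min ha hb).trans (hv.min_le_add a b)
      algebraMap_mem' := hq }
  obtain ⟨x, hx⟩ := hv.surj 1
  have hxS : x ∈ S := by
    change 0 ≤ ord x
    rw [hx]; norm_cast
  have : x⁻¹ ∈ S := S.inv_mem_of_algebraic (x := ⟨x, hxS⟩) (Algebra.IsAlgebraic.isAlgebraic x)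
  have h1 : 0 ≤ ord x⁻¹ := this
  have h2 := hv.ord_zpow hx (-1)
  rw [zpow_neg_one] at h2
  rw [h2] at h1
  norm_cast at h1

lemma IsDyadicOrd.exists_abs (hv : IsDyadicOrd ord) {e : ℕ}
    (he : ord (2 : F) = ((e : ℤ) : WithTop ℤ)) (hpos : 0 < e) :
    ∃ v : AbsoluteValue F ℝ, (∀ x y, v (x + y) ≤ max (v x) (v y)) ∧
      (∀ x, v x ≤ 1 ↔ 0 ≤ ord x) ∧ (∀ x, v x < 1 ↔ 0 < ord x) ∧
      ∀ q : ℚ_[2], v (algebraMap ℚ_[2] F q) = ‖q‖ := by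
  classical
  let b : ℝ := (2⁻¹ : ℝ) ^ ((e : ℝ)⁻¹)
  have hb0 : 0 < b := by positivity
  have hb1 : b < 1 := Real.rpow_lt_one (by norm_num) (by norm_num) (by positivity)
  have hbe : b ^ e = 2⁻¹ := Real.rpow_inv_natCast_pow (by norm_num) hpos.ne'
  let g : F → ℝ := fun x => if x = 0 then 0 else b ^ ((ord x).untopD 0)
  have g0 : g 0 = 0 := by simp [g]
  have gn : ∀ {x : F} {n : ℤ}, ord x = (n : WithTop ℤ) → g x = b ^ n := by
    intro x n h
    simp [g, hv.ne_zero h, h]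
  have gle : ∀ (x y : F), ord x ≤ ord y → g y ≤ g x := by
    intro x y h
    by_cases hy : y = 0
    · subst hy; rw [g0]
      simp only [g]; split_ifs <;> positivity
    by_cases hx : x = 0
    · subst hx
      rw [hv.map_zero, top_le_iff] at h
      exact absurd h (hv.ne_top y hy)
    obtain ⟨n, hn⟩ := hv.exists_int hx
    obtain ⟨m, hm⟩ := hv.exists_int hy
    rw [gn hn, gn hm]
    rw [hn, hm] at h
    norm_cast at h
    exact zpow_le_zpow_right_of_le_one₀ hb0 hb1.le h
  have gult : ∀ x y, g (x + y) ≤ max (g x) (g y) := by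
    intro x y
    have := hv.min_le_add x y
    rcases min_choice (ord x) (ord y) with h | h <;> rw [h] at this
    · exact (gle _ _ this).trans (le_max_left _ _)
    · exact (gle _ _ this).trans (le_max_right _ _)
  have gnn : ∀ x, 0 ≤ g x := by
    intro x; simp only [g]; split_ifs <;> positivity
  let v : AbsoluteValue F ℝ :=
    { toFun := g
      map_mul' := by
        intro x y
        by_cases hx : x = 0
        · simp [hx, g0]
        by_cases hy : y = 0
        · simp [hy, g0]
        obtain ⟨n, hn⟩ := hv.exists_int hx
        obtain ⟨m, hm⟩ := hv.exists_int hy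
        have : ord (x * y) = ((n + m : ℤ) : WithTop ℤ) := by
          rw [hv.map_mul, hn, hm]; norm_cast
        rw [gn hn, gn hm, gn this, zpow_add₀ hb0.ne']
      nonneg' := gnn
      eq_zero' := by
        intro x
        by_cases hx : x = 0
        · simp [hx, g0]
        · obtain ⟨n, hn⟩ := hv.exists_int hx
          simp only [hx, iff_false]
          rw [gn hn]; positivity
      add_le' := by
        intro x y
        exact (gult x y).trans (max_le_add_of_nonneg (gnn x) (gnn y)) }
  refine ⟨v, gult, ?_, ?_, ?_⟩
  · intro x
    change g x ≤ 1 ↔ _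
    by_cases hx : x = 0
    · simp [hx, g0, hv.map_zero]
    obtain ⟨n, hn⟩ := hv.exists_int hx
    rw [gn hn, hn, zpow_le_one_iff_right_of_lt_one₀ hb0 hb1]
    norm_cast
  · intro x
    change g x < 1 ↔ _
    by_cases hx : x = 0
    · simp [hx, g0, hv.map_zero]
    obtain ⟨n, hn⟩ := hv.exists_int hx
    rw [gn hn, hn, zpow_lt_one_iff_right_of_lt_one₀ hb0 hb1]
    norm_cast
  · intro q
    change g _ = _
    by_cases hq : q = 0
    · simp [hq, g0]
    have hpv : (2 : ℚ_[2]).valuation = 1 := by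
      exact_mod_cast Padic.valuation_p (p := 2)
    have hu := hv.compat (q * 2 ^ (-q.valuation)) (mul_ne_zero hq (zpow_ne_zero _ two_ne_zero)) (by
      rw [Padic.valuation_mul hq (zpow_ne_zero _ two_ne_zero), Padic.valuation_zpow, hpv]; ring)
    rw [_root_.map_mul, hv.map_mul, map_zpow₀, map_ofNat, hv.ord_zpow he] at hu
    obtain ⟨n, hn⟩ := hv.exists_int (x := algebraMap ℚ_[2] F q) (by simpa using hq)
    rw [hn] at hu
    norm_cast at hu
    have hn' : n = (e : ℤ) * q.valuation := by linarith
    rw [gn hn, Padic.norm_eq_zpow_neg_valuation hq, hn', zpow_mul, zpow_natCast, hbe, inv_zpow']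
    norm_num

lemma IsDyadicOrd.facts [FiniteDimensional ℚ_[2] F] (hv : IsDyadicOrd ord) {e : ℕ}
    (he : ord (2 : F) = ((e : ℤ) : WithTop ℤ)) :
    (∀ A B k : F, 0 ≤ ord A → ord B = 0 → 0 < ord k → ∃ q : F, A * q ^ 2 + B * q + k = 0) ∧
    (∀ u : F, ord u = 0 → ∃ p : F, 0 < ord (p ^ 2 - u)) := by
  have hpos := hv.e_pos he
  obtain ⟨v, hult, hle, hlt, hq⟩ := hv.exists_abs he hpos
  letI : NormedField F := v.toNormedField
  have hnorm : ∀ x : F, ‖x‖ = v x := fun _ => rfl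
  letI : NormedSpace ℚ_[2] F :=
    { norm_smul_le := by
        intro a x
        rw [Algebra.smul_def, norm_mul, hnorm (algebraMap _ _ a), hq] }
  haveI : IsUltrametricDist F :=
    IsUltrametricDist.isUltrametricDist_of_forall_norm_add_le_max_norm hult
  haveI : ProperSpace F := FiniteDimensional.proper ℚ_[2] F
  have h1 : ∀ x : F, ord x = 0 → ‖x‖ = 1 := by
    intro x hx
    apply le_antisymm
    · exact (hle x).2 hx.ge
    · by_contra hc
      push Not at hc
      exact absurd ((hlt x).1 hc) (by simp [hx])
  constructor
  · intro A B k hA hB hk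
    exact hensel_quad A B k ((hle A).2 hA) (h1 B hB) ((hlt k).2 hk)
  · intro u hu
    obtain ⟨p, hp⟩ := sqrt_near (K := F) ((hlt 2).2 (by rw [he]; exact_mod_cast hpos)) u (h1 u hu)
    exact ⟨p, (hlt _).1 hp⟩


lemma IsDyadicOrd.ord_sq (hv : IsDyadicOrd ord) {x : F} {n : ℤ} (h : ord x = (n : WithTop ℤ)) :
    ord (x ^ 2) = ((2 * n : ℤ) : WithTop ℤ) := by
  have := hv.ord_zpow h 2
  exact_mod_cast this

lemma IsDyadicOrd.delta (hv : IsDyadicOrd ord) {e : ℕ}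
    (he : ord (2 : F) = ((e : ℤ) : WithTop ℤ)) (hpos : 0 < e)
    (Δ : F) (hΔu : ord Δ = 0) (hΔd : ddefect ord Δ = (2 * e : ℕ∞)) :
    (∃ d : F, Δ = d ^ 2) ∨ ∃ d ρ : F, 0 ≤ ord ρ ∧ Δ = (1 + 4 * ρ) * d ^ 2 := by
  have h20 : (2 : F) ≠ 0 := hv.ne_zero he
  have hΔ0 : Δ ≠ 0 := hv.ne_zero (n := 0) (by simpa using hΔu)
  have hfin : ddefect ord Δ < ⊤ := by
    rw [hΔd]; exact_mod_cast ENat.natCast_lt_top (2 * e)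
  obtain ⟨d, hd⟩ := ENat.exists_eq_iSup_of_lt_top hfin
  have hd2 : WithTop.map Int.toNat (ord (Δ⁻¹ * (Δ - d ^ 2))) = (2 * e : ℕ∞) := by
    rw [← hΔd]; exact hd
  by_cases hz : Δ - d ^ 2 = 0
  · exact Or.inl ⟨d, sub_eq_zero.1 hz⟩
  right
  obtain ⟨m, hm⟩ := hv.exists_int (mul_ne_zero (inv_ne_zero hΔ0) hz)
  rw [hm, WithTop.map_coe] at hd2
  have hd3 : m.toNat = 2 * e := by
    have : ((m.toNat : ℕ) : ℕ∞) = ((2 * e : ℕ) : ℕ∞) := by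
      push_cast; exact hd2
    exact_mod_cast this
  have hm2 : m = 2 * e := by omega
  have hdd : ord (d ^ 2) = 0 := by
    have e1 : d ^ 2 = Δ * (1 + -(Δ⁻¹ * (Δ - d ^ 2))) := by field_simp; ring
    have e2 : ord (1 + -(Δ⁻¹ * (Δ - d ^ 2))) = ord 1 := by
      apply hv.add_eq
      rw [hv.neg, hm, hv.one, hm2]
      exact_mod_cast (by omega : (0 : ℤ) < 2 * e)
    rw [e1, hv.map_mul, e2, hΔu, hv.one, add_zero]
  have hd0 : d ^ 2 ≠ 0 := hv.ne_zero (n := 0) (by simpa using hdd)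
  refine ⟨d, (Δ - d ^ 2) / (2 ^ 2 * d ^ 2), ?_, ?_⟩
  · obtain ⟨r, hr⟩ := hv.exists_int (div_ne_zero hz (mul_ne_zero (pow_ne_zero 2 h20) hd0))
    have e1 : Δ * (Δ⁻¹ * (Δ - d ^ 2)) = (Δ - d ^ 2) / (2 ^ 2 * d ^ 2) * (2 ^ 2 * d ^ 2) := by
      rw [div_mul_cancel₀ _ (mul_ne_zero (pow_ne_zero 2 h20) hd0), mul_inv_cancel_left₀ hΔ0]
    have e2 := congrArg ord e1
    rw [hv.map_mul, hv.map_mul ((Δ - d ^ 2) / (2 ^ 2 * d ^ 2)), hv.map_mul (2 ^ 2), hm, hr, hΔu,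
      hdd, hv.ord_sq he, zero_add, add_zero] at e2
    norm_cast at e2
    rw [hr]
    exact_mod_cast (by omega : 0 ≤ r)
  · have : d ≠ 0 := fun h => hd0 (by simp [h])
    have h4 : (4 : F) = 2 ^ 2 := by norm_num
    rw [h4]
    field_simp
    ring

end Ord

/-- if `ord a₁ = 0`, `ord a₂ = -2e` and `-a₁a₂ ∈ (Fˣ)² ∪ Δ(Fˣ)²`, then:
if `ord a₃ = 0` the form `[a₁,a₂,a₃]` is isotropic, and if `ord a₃ = 1`
then `[a₁,a₂,a₃]` is isotropic iff `[a₁,a₂]` is. -/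
theorem stmt9 {F : Type*} [Field F] [Algebra ℚ_[2] F] [FiniteDimensional ℚ_[2] F]
    (ord : F → WithTop ℤ) (hv : IsDyadicOrd ord)
    (e : ℕ) (he : ord (2 : F) = ((e : ℤ) : WithTop ℤ))
    (Δ : F) (hΔu : ord Δ = 0) (hΔd : ddefect ord Δ = (2 * e : ℕ∞))
    (a₁ a₂ a₃ : F) (h₁ : a₁ ≠ 0) (h₂ : a₂ ≠ 0) (h₃ : a₃ ≠ 0)
    (hR₁ : ord a₁ = 0) (hR₂ : ord a₂ = ((-(2 * (e : ℤ)) : ℤ) : WithTop ℤ))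
    (hsq : (∃ c : F, -(a₁ * a₂) = c ^ 2) ∨ (∃ c : F, -(a₁ * a₂) = Δ * c ^ 2)) :
    (ord a₃ = 0 →
      ∃ x y z : F, (x, y, z) ≠ (0, 0, 0) ∧
        a₁ * x ^ 2 + a₂ * y ^ 2 + a₃ * z ^ 2 = 0) ∧
    (ord a₃ = ((1 : ℤ) : WithTop ℤ) →
      ((∃ x y z : F, (x, y, z) ≠ (0, 0, 0) ∧
          a₁ * x ^ 2 + a₂ * y ^ 2 + a₃ * z ^ 2 = 0) ↔
        ∃ x y : F, (x, y) ≠ (0, 0) ∧ a₁ * x ^ 2 + a₂ * y ^ 2 = 0)) := by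
  have hpos := hv.e_pos he
  obtain ⟨hH, hP⟩ := hv.facts he
  have h20 : (2 : F) ≠ 0 := hv.ne_zero he
  have iso : ∀ c : F, -(a₁ * a₂) = c ^ 2 →
      ∃ x y : F, (x, y) ≠ (0, 0) ∧ a₁ * x ^ 2 + a₂ * y ^ 2 = 0 := by
    intro c hc
    refine ⟨c, a₁, by simp [h₁], ?_⟩
    linear_combination -a₁ * hc
  have ext3 : (∃ x y : F, (x, y) ≠ (0, 0) ∧ a₁ * x ^ 2 + a₂ * y ^ 2 = 0) →
      ∃ x y z : F, (x, y, z) ≠ (0, 0, 0) ∧ a₁ * x ^ 2 + a₂ * y ^ 2 + a₃ * z ^ 2 = 0 := by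
    rintro ⟨x, y, hxy, h⟩
    refine ⟨x, y, 0, ?_, by linear_combination h⟩
    intro h0
    apply hxy
    simp only [Prod.mk.injEq] at h0 ⊢
    exact ⟨h0.1, h0.2.1⟩
  have hcase : (∃ c : F, -(a₁ * a₂) = c ^ 2) ∨
      ∃ c ρ : F, 0 ≤ ord ρ ∧ -(a₁ * a₂) = (1 + 4 * ρ) * c ^ 2 := by
    rcases hsq with h | ⟨c, hc⟩
    · exact Or.inl h
    rcases hv.delta he hpos Δ hΔu hΔd with ⟨d, hd⟩ | ⟨d, ρ, hρ, hd⟩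
    · exact Or.inl ⟨d * c, by rw [hc, hd]; ring⟩
    · exact Or.inr ⟨d * c, ρ, hρ, by rw [hc, hd]; ring⟩
  rcases hcase with ⟨c, hc⟩ | ⟨c, ρ, hρ, hc⟩
  · exact ⟨fun _ => ext3 (iso c hc), fun _ => ⟨fun _ => iso c hc, ext3⟩⟩
  have hc0 : c ≠ 0 := by
    rintro rfl
    apply mul_ne_zero h₁ h₂
    linear_combination -hc
  constructor
  · intro hR₃
    have hu : ord (-(a₁ * a₃)) = 0 := by rw [hv.neg, hv.map_mul, hR₁, hR₃, add_zero]
    obtain ⟨p, hp⟩ := hP _ hu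
    have hp2 : ord (p ^ 2) = 0 := by
      have := hv.add_eq (x := -(a₁ * a₃)) (y := p ^ 2 - -(a₁ * a₃)) (by rw [hu]; exact hp)
      rw [hu, add_sub_cancel] at this
      exact this
    have hp0 : p ≠ 0 := by
      rintro rfl
      rw [zero_pow two_ne_zero, hv.map_zero] at hp2
      exact WithTop.top_ne_zero hp2
    have hpu : ord p = 0 := by
      obtain ⟨n, hn⟩ := hv.exists_int hp0
      rw [hv.ord_sq hn] at hp2
      norm_cast at hp2
      rw [hn]
      have : n = 0 := by omega
      simp [this]
    obtain ⟨q, hq⟩ := hH (-ρ) p (p ^ 2 - -(a₁ * a₃)) (by rwa [hv.neg]) hpu hp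
    refine ⟨(p + q / 2) / a₁, (q / 2) / c, 1, by simp, ?_⟩
    have ha2 : a₂ = -((1 + 4 * ρ) * c ^ 2) / a₁ := by
      field_simp
      linear_combination -hc
    rw [ha2]
    field_simp
    linear_combination 4 * hq
  · intro hR₃
    refine ⟨?_, ext3⟩
    rintro ⟨x, y, z, hxyz, h⟩
    by_cases hz : z = 0
    · subst hz
      refine ⟨x, y, ?_, by linear_combination h⟩
      intro h0
      apply hxyz
      simp only [Prod.mk.injEq] at h0 ⊢
      exact ⟨h0.1, h0.2, trivial⟩
    obtain ⟨m, hm⟩ := hv.exists_int hz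
    have hw : ord (-(a₁ * a₃) * z ^ 2) = ((1 + 2 * m : ℤ) : WithTop ℤ) := by
      rw [hv.map_mul, hv.neg, hv.map_mul, hR₁, hR₃, hv.ord_sq hm, zero_add]
      norm_cast
    have hXY : (a₁ * x) ^ 2 - (1 + 4 * ρ) * (c * y) ^ 2 = -(a₁ * a₃) * z ^ 2 := by
      linear_combination a₁ * h + y ^ 2 * hc
    by_cases hy : y = 0
    · exfalso
      have e1 : (a₁ * x) ^ 2 = -(a₁ * a₃) * z ^ 2 := by rw [← hXY, hy]; ring
      have hx0 : a₁ * x ≠ 0 := by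
        intro h0
        rw [h0, zero_pow two_ne_zero] at e1
        exact hv.ne_zero hw e1.symm
      obtain ⟨n, hn⟩ := hv.exists_int hx0
      rw [← e1, hv.ord_sq hn] at hw
      norm_cast at hw
      omega
    have hY0 : c * y ≠ 0 := mul_ne_zero hc0 hy
    have hYY : 2 * (c * y) ≠ 0 := mul_ne_zero h20 hY0
    obtain ⟨t, ht⟩ : ∃ t : F, t * (2 * (c * y)) = a₁ * x - c * y :=
      ⟨(a₁ * x - c * y) / (2 * (c * y)), div_mul_cancel₀ _ hYY⟩
    have hN : (t ^ 2 + (t - ρ)) * (2 * (c * y)) ^ 2 = -(a₁ * a₃) * z ^ 2 := by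
      rw [← hXY]
      have : a₁ * x = t * (2 * (c * y)) + c * y := by rw [ht]; ring
      rw [this]; ring
    have hN0 : t ^ 2 + (t - ρ) ≠ 0 := by
      intro h0
      rw [h0, zero_mul] at hN
      exact hv.ne_zero hw hN.symm
    obtain ⟨n, hn⟩ := hv.exists_int hN0
    obtain ⟨k, hk⟩ := hv.exists_int hYY
    have hnk : n + 2 * k = 1 + 2 * m := by
      rw [← hN, hv.map_mul, hn, hv.ord_sq hk] at hw
      exact_mod_cast hw
    have ht0 : 0 ≤ ord t := by
      by_contra hneg
      push Not at hneg
      have htz : t ≠ 0 := by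
        rintro rfl
        rw [hv.map_zero] at hneg
        exact absurd hneg (by simp)
      obtain ⟨j, hj⟩ := hv.exists_int htz
      rw [hj] at hneg
      have hj0 : j < 0 := by exact_mod_cast hneg
      have e1 : ord (t - ρ) = ord t := by
        rw [sub_eq_add_neg]
        apply hv.add_eq
        rw [hv.neg, hj]
        exact lt_of_lt_of_le hneg hρ
      have e2 : ord (t ^ 2 + (t - ρ)) = ord (t ^ 2) := by
        apply hv.add_eq
        rw [e1, hj, hv.ord_sq hj]
        exact_mod_cast (by omega : 2 * j < j)
      rw [hn, hv.ord_sq hj] at e2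
      norm_cast at e2
      omega
    have hnn : 0 ≤ ord (t ^ 2 + (t - ρ)) := by
      refine (le_min ?_ ?_).trans (hv.min_le_add _ _)
      · rw [pow_two, hv.map_mul]; exact add_nonneg ht0 ht0
      · rw [sub_eq_add_neg]
        refine (le_min ht0 ?_).trans (hv.min_le_add _ _)
        rwa [hv.neg]
    have hnp : 0 < ord (t ^ 2 + (t - ρ)) := by
      rw [hn] at hnn ⊢
      have : 0 ≤ n := by exact_mod_cast hnn
      exact_mod_cast (by omega : 0 < n)
    have hB : ord (1 + 2 * t) = 0 := by
      rw [← hv.one]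
      apply hv.add_eq
      rw [hv.one, hv.map_mul, he]
      refine lt_of_lt_of_le ?_ (le_add_of_nonneg_right ht0)
      exact_mod_cast hpos
    obtain ⟨q, hq⟩ := hH 1 (1 + 2 * t) _ hv.one.ge hB hnp
    apply iso ((2 * (t + q) + 1) * c)
    rw [hc]
    linear_combination (-4 * c ^ 2) * hq
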